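/- Let (e_i) be a normalized basis of a Banach space X with the following property: whenever (y_i) is a convex block subsequence of (e_i) such that lim_i ‖y_i‖ exists and is positive, every spreading model (s_n) of the normalized sequence x_i = y_i/‖y_i‖ satisfies ‖s_1 + s_2‖ = 2. Then (e_i) is not weakly null; moreover, for every ε > 0 there exist a strictly increasing sequence (m_i) of natural numbers and a functional x* ∈ X* with ‖x*‖ = 1 and x*(e_{m_i}) > 1 − ε for all i. -/

import Mathlib

/-!
Write `θ = 1 - ε`. By weak-* compactness it is enough to find `m 0 < m 1 < ⋯` such that for each
`n` some functional in the dual unit ball is at least `θ` at `e (m 0), …, e (m n)`.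

**Use of the hypothesis.** If `y` is a convex block subsequence with `‖y i‖ → 1`, then some
subsequence of `y i / ‖y i‖` has a spreading model `s`, and `‖s 0 + s 1‖ = 2` provides pairs
`i < j` arbitrarily far out with `‖(y i + y j) / 2‖` close to `1` (`hasPairs_of_spreadingModel`).
Hence averages of `2 ^ k` blocks can be formed without losing norm. Existence of the spreading
model (`exists_spreadingModel`) is shown with iterated limits along a nonprincipal ultrafilter
instead of Ramsey's theorem: these limits define a seminorm on `c₀₀`, whose completion is the
model, and a subsequence realizing them uniformly is chosen inductively using compactness of cubes.
The model is a basic sequence because the basis projections of `e` are uniformly bounded, which is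
the open mapping theorem applied to the limit map on convergent partial sums (`exists_tailDom`).

**Induction.** Call a convex set rich if it contains, arbitrarily far out, convex combinations of
the `e i` with norm close to `1`. Call a finite set `F` avoidable if every rich convex set stays
rich after restricting to vectors on which all functionals that are `≥ θ` on `F` are at most
`θ + η`, for each `η > 0`. If `insert m F` is avoidable for all large `m`, so is `F`
(`avoidable_of_insert`): blocks can be chosen so that each relevant functional exceeds the level on
at most one of them, and a long average flattens this excess. By Hahn–Banach `∅` is not avoidable,
so there is an infinite branch of non-avoidable sets (`exists_branch`). A set on which no functional
of the ball is `≥ θ` is trivially avoidable, hence the required functionals exist along the branch.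
-/

noncomputable section

/-- A basic sequence: there is a constant `C` dominating all projections onto
initial segments. -/
def IsBasicSeq {S : Type*} [NormedAddCommGroup S] [NormedSpace ℝ S] (s : ℕ → S) : Prop :=
  ∃ C : ℝ, ∀ m n : ℕ, m ≤ n → ∀ a : ℕ → ℝ,
    ‖∑ i ∈ Finset.range m, a i • s i‖ ≤ C * ‖∑ i ∈ Finset.range n, a i • s i‖

/-- `s` is a spreading model of `x`. -/
def IsSpreadingModel {X : Type*} [NormedAddCommGroup X] [NormedSpace ℝ X]
    {S : Type*} [NormedAddCommGroup S] [NormedSpace ℝ S]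
    (x : ℕ → X) (s : ℕ → S) : Prop :=
  IsBasicSeq s ∧
  ∃ ε : ℕ → ℝ, (∀ n, 0 < ε n) ∧ Antitone ε ∧ Filter.Tendsto ε Filter.atTop (nhds 0) ∧
    ∀ (n : ℕ) (a : Fin n → ℝ), (∀ i, |a i| ≤ 1) →
      ∀ k : Fin n → ℕ, StrictMono k → (∀ i, n ≤ k i) →
        |‖∑ i, a i • x (k i)‖ - ‖∑ i, a i • s i‖| < ε n

/-- `e` is a Schauder basis of `X`: every vector has a unique representation as a
norm-convergent series. -/
def IsSchauderBasis {X : Type*} [NormedAddCommGroup X] [NormedSpace ℝ X] (e : ℕ → X) : Prop :=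
  ∀ x : X, ∃! a : ℕ → ℝ,
    Filter.Tendsto (fun n => ∑ i ∈ Finset.range n, a i • e i) Filter.atTop (nhds x)

/-- `y` is a block basis of the basis `e`: `y j = ∑_{i ∈ E j} a i • e i` with the
finite sets `E j` nonempty and successive (`max E j < min E (j+1)`), and `y j ≠ 0`. -/
def IsBlockBasis {X : Type*} [NormedAddCommGroup X] [NormedSpace ℝ X]
    (e : ℕ → X) (y : ℕ → X) : Prop :=
  ∃ (E : ℕ → Finset ℕ) (a : ℕ → ℝ),
    (∀ j, (E j).Nonempty) ∧
    (∀ j, ∀ p ∈ E j, ∀ q ∈ E (j + 1), p < q) ∧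
    (∀ j, y j = ∑ i ∈ E j, a i • e i) ∧
    (∀ j, y j ≠ 0)


/-- `y` is a convex block subsequence of `e`: `y i = ∑_{j ∈ A i} c j • e j` with
nonempty finite sets `A 1 < A 2 < ⋯` and nonnegative coefficients summing to `1`
over each `A i`. -/
def IsConvexBlockSubseq {X : Type*} [NormedAddCommGroup X] [NormedSpace ℝ X]
    (e : ℕ → X) (y : ℕ → X) : Prop :=
  ∃ (A : ℕ → Finset ℕ) (c : ℕ → ℝ),
    (∀ i, (A i).Nonempty) ∧
    (∀ i, ∀ p ∈ A i, ∀ q ∈ A (i + 1), p < q) ∧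
    (∀ i, ∀ j ∈ A i, 0 ≤ c j) ∧
    (∀ i, ∑ j ∈ A i, c j = 1) ∧
    (∀ i, y i = ∑ j ∈ A i, c j • e j)

open Filter Topology

section Aux

variable {X : Type*} [NormedAddCommGroup X] [NormedSpace ℝ X]

/-! ### The basis constant -/

/-- The initial segment projections of a sequence `x` are bounded by `C`, in the form used below:
`C` dominates the norm of `v` by the norm of `v + u` whenever `v` lies in the span of the first
`N` vectors and `u` in the span of the remaining ones. -/
def TailDom (C : ℝ) (x : ℕ → X) : Prop :=
  ∀ N : ℕ, ∀ v ∈ Submodule.span ℝ (x '' {i | i < N}),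
    ∀ u ∈ Submodule.span ℝ (x '' {i | N ≤ i}), ‖v‖ ≤ C * ‖v + u‖

/-- The convergent sequences of the form `n ↦ ∑ i < n, a i • e i`, as a subspace of
`C(ℕ ∪ {∞}, X)`. -/
def partialSums (e : ℕ → X) : Submodule ℝ C(OnePoint ℕ, X) where
  carrier := {g | g (0 : ℕ) = 0 ∧
    ∀ n : ℕ, g ((n + 1 : ℕ) : OnePoint ℕ) - g (n : OnePoint ℕ) ∈ Submodule.span ℝ {e n}}
  add_mem' := by
    rintro f g ⟨hf, hf'⟩ ⟨hg, hg'⟩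
    refine ⟨by simp [hf, hg], fun n => ?_⟩
    have := Submodule.add_mem _ (hf' n) (hg' n)
    simp only [ContinuousMap.add_apply]
    rwa [add_sub_add_comm]
  zero_mem' := by simp
  smul_mem' := by
    rintro c f ⟨hf, hf'⟩
    refine ⟨by simp [hf], fun n => ?_⟩
    have := Submodule.smul_mem _ c (hf' n)
    simp only [ContinuousMap.smul_apply]
    rwa [← smul_sub]

lemma isClosed_partialSums (e : ℕ → X) :
    IsClosed (partialSums e : Set C(OnePoint ℕ, X)) := by
  have : (partialSums e : Set C(OnePoint ℕ, X)) = {g | g (0 : ℕ) = 0} ∩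
      ⋂ n : ℕ, {g | g ((n + 1 : ℕ) : OnePoint ℕ) - g (n : OnePoint ℕ) ∈
        (Submodule.span ℝ {e n} : Set X)} := by
    ext g; simp [partialSums]
  rw [this]
  refine (isClosed_eq (continuous_eval_const _) continuous_const).inter
    (isClosed_iInter fun n => ?_)
  exact (Submodule.closed_of_finiteDimensional (Submodule.span ℝ {e n})).preimage
    ((continuous_eval_const _).sub (continuous_eval_const _))

/-- The limit map from `partialSums e` to `X` is a bijection of Banach spaces, so by the open
mapping theorem the partial sums are controlled by their limit. -/
lemma exists_tailDom [CompleteSpace X] {e : ℕ → X} (he : IsSchauderBasis e) :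
    ∃ C : ℝ, 0 < C ∧ TailDom C e := by
  have : CompleteSpace (partialSums e) := (isClosed_partialSums e).completeSpace_coe
  let L : partialSums e →L[ℝ] X :=
    (ContinuousMap.evalCLM ℝ (OnePoint.infty : OnePoint ℕ)).comp (partialSums e).subtypeL
  have hL : ∀ g : partialSums e, L g = g.1 OnePoint.infty := fun g => rfl
  have hsurj : Function.Surjective L := by
    intro x
    obtain ⟨a, ha, -⟩ := he x
    refine ⟨⟨OnePoint.continuousMapMkNat _ x ha, ?_, ?_⟩, ?_⟩
    · change ∑ i ∈ Finset.range 0, a i • e i = 0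
      simp
    · intro n
      change ∑ i ∈ Finset.range (n + 1), a i • e i - ∑ i ∈ Finset.range n, a i • e i ∈ _
      rw [Finset.sum_range_succ, add_sub_cancel_left]
      exact Submodule.smul_mem _ _ (Submodule.mem_span_singleton_self _)
    · rfl
  obtain ⟨C, hC0, hC⟩ := L.exists_preimage_norm_le hsurj
  refine ⟨C, hC0, ?_⟩
  intro N v hv u hu
  obtain ⟨lv, hlv, rfl⟩ := (Finsupp.mem_span_image_iff_linearCombination ℝ).1 hv
  obtain ⟨lu, hlu, rfl⟩ := (Finsupp.mem_span_image_iff_linearCombination ℝ).1 hu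
  obtain ⟨g, hg, hgn⟩ := hC (Finsupp.linearCombination ℝ e lv + Finsupp.linearCombination ℝ e lu)
  rw [hL] at hg
  choose b hb using fun n => Submodule.mem_span_singleton.1 (g.2.2 n)
  have hgb : ∀ n : ℕ, g.1 (n : OnePoint ℕ) = ∑ i ∈ Finset.range n, b i • e i := by
    intro n
    induction n with
    | zero => simpa using g.2.1
    | succ n ih => rw [Finset.sum_range_succ, ← ih, hb]; abel
  have hlim : Tendsto (fun n : ℕ => ∑ i ∈ Finset.range n, b i • e i) atTop
      (𝓝 (g.1 OnePoint.infty)) := by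
    simp_rw [← hgb]
    have h1 : Tendsto ((↑) : ℕ → OnePoint ℕ) atTop (𝓝 OnePoint.infty) := by
      have := OnePoint.tendsto_coe_infty (X := ℕ)
      simpa [coclosedCompact_eq_cocompact, Nat.cofinite_eq_atTop] using this
    exact (g.1.continuous.tendsto _).comp h1
  -- the coefficients of `v + u`, read off from the finite expansions of `v` and `u`
  have hlim' : Tendsto (fun n : ℕ => ∑ i ∈ Finset.range n, (lv + lu) i • e i) atTop
      (𝓝 (g.1 OnePoint.infty)) := by
    rw [hg, ← map_add]
    apply tendsto_const_nhds.congr'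
    filter_upwards [eventually_ge_atTop ((lv + lu).support.sup id + 1)] with n hn
    rw [Finsupp.linearCombination_apply]
    apply Finsupp.sum_of_support_subset
    · intro i hi
      have := Finset.le_sup (f := id) hi
      simp only [id, Finset.mem_range] at *
      omega
    · simp
  have hbl : b = ⇑(lv + lu) := (he _).unique hlim hlim'
  have hvN : g.1 (N : OnePoint ℕ) = Finsupp.linearCombination ℝ e lv := by
    rw [hgb, hbl, Finsupp.linearCombination_apply]
    symm
    rw [Finsupp.sum_of_support_subset (s := Finset.range N)]
    · refine Finset.sum_congr rfl fun i hi => ?_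
      have : lu i = 0 := by
        by_contra hne
        have := hlu (Finsupp.mem_support_iff.2 hne)
        simp at this hi
        omega
      simp [this]
    · intro i hi
      have := hlv hi
      simpa using this
    · simp
  have h1 := g.1.norm_coe_le_norm (N : OnePoint ℕ)
  rw [hvN] at h1
  exact h1.trans hgn

/-! ### Iterated limits along an ultrafilter -/

/-- `iterLim x r a v` is the iterated limit
`lim_{k₀} lim_{k₁} ⋯ lim_{k_{r-1}} ‖v + ∑ i < r, a i • x (k i)‖` along a fixed nonprincipal
ultrafilter on `ℕ`. -/
def iterLim (x : ℕ → X) : ℕ → (ℕ → ℝ) → X → ℝ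
  | 0, _, v => ‖v‖
  | r + 1, a, v =>
      limUnder (hyperfilter ℕ : Filter ℕ) fun k => iterLim x r (fun i => a (i + 1)) (v + a 0 • x k)

lemma exists_tendsto_ultrafilter (U : Ultrafilter ℕ) {g : ℕ → ℝ} {c d : ℝ}
    (hg : ∀ k, g k ∈ Set.Icc c d) : ∃ l ∈ Set.Icc c d, Tendsto g U (𝓝 l) := by
  have := (isCompact_Icc (a := c) (b := d)).ultrafilter_le_nhds (U.map g)
    (by
      rw [Ultrafilter.coe_map, le_principal_iff]
      exact Filter.mem_map.2 (Filter.univ_mem' hg))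
  simpa [Tendsto] using this

variable {x : ℕ → X}

lemma iterLim_mem_Icc (hx : ∀ k, ‖x k‖ ≤ 1) (r : ℕ) : ∀ (a : ℕ → ℝ) (v : X),
    iterLim x r a v ∈ Set.Icc 0 (‖v‖ + ∑ i ∈ Finset.range r, |a i|) ∧
    ∀ s, r = s + 1 → Tendsto (fun k => iterLim x s (fun i => a (i + 1)) (v + a 0 • x k))
      (hyperfilter ℕ) (𝓝 (iterLim x r a v)) := by
  induction r with
  | zero => intro a v; simp [iterLim]
  | succ r ih =>
    intro a v
    obtain ⟨l, hl, hlim⟩ := exists_tendsto_ultrafilter (hyperfilter ℕ)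
      (g := fun k => iterLim x r (fun i => a (i + 1)) (v + a 0 • x k))
      (c := 0) (d := ‖v‖ + ∑ i ∈ Finset.range (r + 1), |a i|) (by
        intro k
        refine ⟨(ih _ _).1.1, (ih _ _).1.2.trans ?_⟩
        have h1 : ‖v + a 0 • x k‖ ≤ ‖v‖ + |a 0| := by
          refine (norm_add_le _ _).trans ?_
          rw [norm_smul, Real.norm_eq_abs]
          gcongr
          exact mul_le_of_le_one_right (abs_nonneg _) (hx k)
        rw [Finset.sum_range_succ']
        linarith)
    have heq : iterLim x (r + 1) a v = l := hlim.limUnder_eq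
    rw [heq]
    refine ⟨hl, ?_⟩
    rintro s hs
    obtain rfl : r = s := by omega
    exact hlim

lemma iterLim_nonneg (hx : ∀ k, ‖x k‖ ≤ 1) (r : ℕ) (a : ℕ → ℝ) (v : X) :
    0 ≤ iterLim x r a v := (iterLim_mem_Icc hx r a v).1.1

lemma iterLim_le (hx : ∀ k, ‖x k‖ ≤ 1) (r : ℕ) (a : ℕ → ℝ) (v : X) :
    iterLim x r a v ≤ ‖v‖ + ∑ i ∈ Finset.range r, |a i| := (iterLim_mem_Icc hx r a v).1.2

lemma tendsto_iterLim (hx : ∀ k, ‖x k‖ ≤ 1) (r : ℕ) (a : ℕ → ℝ) (v : X) :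
    Tendsto (fun k => iterLim x r (fun i => a (i + 1)) (v + a 0 • x k))
      (hyperfilter ℕ) (𝓝 (iterLim x (r + 1) a v)) :=
  (iterLim_mem_Icc hx (r + 1) a v).2 r rfl

lemma iterLim_add_le (hx : ∀ k, ‖x k‖ ≤ 1) (r : ℕ) : ∀ (a b : ℕ → ℝ) (v w : X),
    iterLim x r (a + b) (v + w) ≤ iterLim x r a v + iterLim x r b w := by
  induction r with
  | zero => intro a b v w; exact norm_add_le _ _
  | succ r ih =>
    intro a b v w
    refine le_of_tendsto_of_tendsto' (tendsto_iterLim hx r (a + b) (v + w))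
      ((tendsto_iterLim hx r a v).add (tendsto_iterLim hx r b w)) fun k => ?_
    refine le_trans (le_of_eq ?_) (ih _ _ _ _)
    congr 1
    simp only [Pi.add_apply]
    module

lemma iterLim_smul (hx : ∀ k, ‖x k‖ ≤ 1) (r : ℕ) : ∀ (c : ℝ) (a : ℕ → ℝ) (v : X),
    iterLim x r (c • a) (c • v) = |c| * iterLim x r a v := by
  induction r with
  | zero => intro c a v; simp [iterLim, norm_smul]
  | succ r ih =>
    intro c a v
    refine tendsto_nhds_unique (tendsto_iterLim hx r (c • a) (c • v))
      (((tendsto_iterLim hx r a v).const_mul |c|).congr fun k => ?_)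
    rw [← ih]
    congr 1
    simp only [Pi.smul_apply, smul_eq_mul]
    module

lemma iterLim_congr (r : ℕ) : ∀ (a b : ℕ → ℝ) (v : X), (∀ i < r, a i = b i) →
    iterLim x r a v = iterLim x r b v := by
  induction r with
  | zero => intro a b v _; rfl
  | succ r ih =>
    intro a b v hab
    simp only [iterLim]
    rw [hab 0 (by omega)]
    congr 1
    ext k
    exact ih _ _ _ fun i hi => hab _ (by omega)

/-- Trailing zero coefficients do not change the iterated limit. -/
lemma iterLim_stable (hx : ∀ k, ‖x k‖ ≤ 1) (r : ℕ) : ∀ (s : ℕ) (a : ℕ → ℝ) (v : X), r ≤ s →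
    (∀ i, r ≤ i → a i = 0) → iterLim x s a v = iterLim x r a v := by
  induction r with
  | zero =>
    intro s
    induction s with
    | zero => intro a v _ _; rfl
    | succ s ih =>
      intro a v _ ha
      refine tendsto_nhds_unique (tendsto_iterLim hx s a v) ?_
      refine tendsto_const_nhds.congr fun k => ?_
      rw [ih _ _ (by omega) fun i _ => ha _ (by omega)]
      simp [iterLim, ha 0]
  | succ r ih =>
    intro s a v hrs ha
    obtain ⟨s, rfl⟩ : ∃ t, s = t + 1 := ⟨s - 1, by omega⟩
    simp only [iterLim]
    congr 1
    ext k
    exact ih _ _ _ (by omega) fun i hi => ha _ (by omega)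

lemma iterLim_sub_le (hx : ∀ k, ‖x k‖ ≤ 1) (r : ℕ) (a b : ℕ → ℝ) (v w : X) :
    |iterLim x r a v - iterLim x r b w| ≤ ‖v - w‖ + ∑ i ∈ Finset.range r, |a i - b i| := by
  have key : ∀ (a b : ℕ → ℝ) (v w : X), iterLim x r a v - iterLim x r b w ≤
      ‖v - w‖ + ∑ i ∈ Finset.range r, |a i - b i| := by
    intro a b v w
    have h1 := iterLim_add_le hx r (a - b) b (v - w) w
    have h2 := iterLim_le hx r (a - b) (v - w)
    simp only [sub_add_cancel, Pi.sub_apply] at h1 h2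
    linarith
  rw [abs_sub_le_iff]
  refine ⟨key a b v w, ?_⟩
  have := key b a w v
  rwa [norm_sub_rev, Finset.sum_congr rfl fun i _ => abs_sub_comm (b i) (a i)] at this

lemma le_mul_iterLim (hx : ∀ k, ‖x k‖ ≤ 1) {C : ℝ} (n : ℕ) : ∀ (a : ℕ → ℝ) (v w : X) (N : ℕ),
    (∀ u ∈ Submodule.span ℝ (x '' {i | N ≤ i}), ‖w‖ ≤ C * ‖v + u‖) →
    ‖w‖ ≤ C * iterLim x n a v := by
  induction n with
  | zero =>
    intro a v w N hD
    simpa [iterLim] using hD 0 (Submodule.zero_mem _)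
  | succ n ih =>
    intro a v w N hD
    refine ge_of_tendsto ((tendsto_iterLim hx n a v).const_mul C) ?_
    have hev : ∀ᶠ k in (hyperfilter ℕ : Filter ℕ), N ≤ k :=
      Nat.hyperfilter_le_atTop (eventually_ge_atTop N)
    filter_upwards [hev] with k hk
    refine ih _ _ _ (k + 1) fun u hu => ?_
    rw [add_assoc]
    refine hD _ (Submodule.add_mem _ (Submodule.smul_mem _ _
      (Submodule.subset_span ⟨k, hk, rfl⟩)) (Submodule.span_mono (Set.image_mono ?_) hu))
    intro i hi
    simp only [Set.mem_ofPred_eq] at hi ⊢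
    omega

/-- The basis constant of `x` passes to the iterated limits. -/
lemma iterLim_le_mul (hx : ∀ k, ‖x k‖ ≤ 1) {C : ℝ} (hC : TailDom C x) (m : ℕ) :
    ∀ (n : ℕ) (a : ℕ → ℝ) (v : X) (N : ℕ), v ∈ Submodule.span ℝ (x '' {i | i < N}) → m ≤ n →
    iterLim x m a v ≤ C * iterLim x n a v := by
  induction m with
  | zero =>
    intro n a v N hv _
    exact le_mul_iterLim hx n a v v N fun u hu => hC N v hv u hu
  | succ m ih =>
    intro n a v N hv hmn
    obtain ⟨n, rfl⟩ : ∃ t, n = t + 1 := ⟨n - 1, by omega⟩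
    refine le_of_tendsto_of_tendsto (tendsto_iterLim hx m a v)
      ((tendsto_iterLim hx n a v).const_mul C) ?_
    have hev : ∀ᶠ k in (hyperfilter ℕ : Filter ℕ), N ≤ k :=
      Nat.hyperfilter_le_atTop (eventually_ge_atTop N)
    filter_upwards [hev] with k hk
    refine ih _ _ _ (k + 1) (Submodule.add_mem _ (Submodule.span_mono (Set.image_mono ?_) hv)
      (Submodule.smul_mem _ _ (Submodule.subset_span ⟨k, Nat.lt_succ_self k, rfl⟩))) (by omega)
    intro i hi
    simp only [Set.mem_ofPred_eq] at hi ⊢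
    omega

/-! ### Existence of spreading models -/

/-- The Banach space obtained from `c₀₀` by completing it with respect to a seminorm. -/
lemma exists_banach_of_seminorm (p : Seminorm ℝ (ℕ →₀ ℝ)) :
    ∃ (S : Type) (_ : NormedAddCommGroup S) (_ : NormedSpace ℝ S) (_ : CompleteSpace S)
      (f : (ℕ →₀ ℝ) →ₗ[ℝ] S), ∀ a, ‖f a‖ = p a := by
  let _ : SeminormedAddCommGroup (ℕ →₀ ℝ) := p.toAddGroupSeminorm.toSeminormedAddCommGroup
  let _ : NormedSpace ℝ (ℕ →₀ ℝ) := { norm_smul_le := fun c a => le_of_eq (map_smul_eq_mul p c a) }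
  exact ⟨UniformSpace.Completion (ℕ →₀ ℝ), inferInstance, inferInstance, inferInstance,
    (UniformSpace.Completion.toComplₗᵢ (𝕜 := ℝ) (E := ℕ →₀ ℝ)).toLinearMap,
    fun a => UniformSpace.Completion.norm_coe a⟩

/-- The spreading model seminorm: the iterated limit over all coordinates in the support. -/
def spreadSeminorm (x : ℕ → X) (hx : ∀ k, ‖x k‖ ≤ 1) : Seminorm ℝ (ℕ →₀ ℝ) :=
  have hst : ∀ (a : ℕ →₀ ℝ) (n : ℕ), a.support.sup Nat.succ ≤ n →
      iterLim x (a.support.sup Nat.succ) a 0 = iterLim x n a 0 := by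
    intro a n hn
    refine (iterLim_stable hx _ _ _ _ hn fun i hi => ?_).symm
    by_contra hne
    have := Finset.le_sup (f := Nat.succ) (Finsupp.mem_support_iff.2 hne)
    omega
  Seminorm.of (fun a => iterLim x (a.support.sup Nat.succ) a 0)
    (fun a b => by
      have ha := hst a _ (le_max_left _ (max (b.support.sup Nat.succ)
        ((a + b).support.sup Nat.succ)))
      have hb := hst b _ ((le_max_left _ ((a + b).support.sup Nat.succ)).trans
        (le_max_right (a.support.sup Nat.succ) _))
      have hab := hst (a + b) _ ((le_max_right (b.support.sup Nat.succ) _).trans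
        (le_max_right (a.support.sup Nat.succ) _))
      rw [ha, hb, hab]
      simpa using iterLim_add_le hx _ a b 0 0)
    (fun c a => by
      have ha := hst a _ (le_max_left _ ((c • a).support.sup Nat.succ))
      have hca := hst (c • a) _ (le_max_right (a.support.sup Nat.succ) _)
      rw [ha, hca]
      simpa using iterLim_smul hx _ c a 0)

lemma spreadSeminorm_sum (hx : ∀ k, ‖x k‖ ≤ 1) (n : ℕ) (a : ℕ → ℝ) :
    spreadSeminorm x hx (∑ i ∈ Finset.range n, a i • Finsupp.single i 1) = iterLim x n a 0 := by
  set b : ℕ →₀ ℝ := ∑ i ∈ Finset.range n, a i • Finsupp.single i 1 with hb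
  have hbi : ∀ i, b i = if i < n then a i else 0 := by
    intro i
    simp [hb, Finsupp.finsetSum_apply, Finsupp.single_apply]
  change iterLim x (b.support.sup Nat.succ) b 0 = _
  have h1 : b.support.sup Nat.succ ≤ n := by
    refine Finset.sup_le fun i hi => ?_
    by_contra hlt
    rw [Finsupp.mem_support_iff, hbi, if_neg (by omega)] at hi
    exact hi rfl
  rw [← iterLim_stable hx _ n b 0 h1]
  · exact iterLim_congr _ _ _ _ fun i hi => by rw [hbi, if_pos hi]
  · intro i hi
    by_contra hne
    have := Finset.le_sup (f := Nat.succ) (Finsupp.mem_support_iff.2 hne)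
    omega

/-- The limit defining `iterLim` is uniform over compact sets of vectors and bounded
coefficients. -/
lemma eventually_iterLim_close (hx : ∀ k, ‖x k‖ ≤ 1) {V : Set X} (hV : IsCompact V) (r : ℕ)
    {δ : ℝ} (hδ : 0 < δ) :
    ∀ᶠ k in (hyperfilter ℕ : Filter ℕ), ∀ v ∈ V, ∀ a : ℕ → ℝ, (∀ i, |a i| ≤ 1) →
      |iterLim x r (fun i => a (i + 1)) (v + a 0 • x k) - iterLim x (r + 1) a v| < δ := by
  have hcube : IsCompact (Set.univ.pi fun _ : ℕ => Set.Icc (-1 : ℝ) 1) :=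
    isCompact_univ_pi fun _ => isCompact_Icc
  have key : ∀ᶠ k in (hyperfilter ℕ : Filter ℕ),
      ∀ p ∈ V ×ˢ (Set.univ.pi fun _ : ℕ => Set.Icc (-1 : ℝ) 1),
      |iterLim x r (fun i => p.2 (i + 1)) (p.1 + p.2 0 • x k) - iterLim x (r + 1) p.2 p.1|
        < δ := by
    refine (hV.prod hcube).induction_on
      (p := fun W => ∀ᶠ k in (hyperfilter ℕ : Filter ℕ), ∀ p ∈ W,
        |iterLim x r (fun i => p.2 (i + 1)) (p.1 + p.2 0 • x k) - iterLim x (r + 1) p.2 p.1|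
          < δ) ?_ ?_ ?_ ?_
    · simp
    · intro s t hst ht
      filter_upwards [ht] with k hk p hp using hk p (hst hp)
    · intro s t hs ht
      filter_upwards [hs, ht] with k h1 h2 p hp
      exact hp.elim (h1 p) (h2 p)
    · rintro ⟨w, b⟩ -
      have hcont : Continuous fun p : X × (ℕ → ℝ) =>
          ‖p.1 - w‖ + ∑ i ∈ Finset.range (r + 1), |p.2 i - b i| := by fun_prop
      have hnhds : {p : X × (ℕ → ℝ) |
          ‖p.1 - w‖ + ∑ i ∈ Finset.range (r + 1), |p.2 i - b i| < δ / 4} ∈ 𝓝 (w, b) := by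
        refine (isOpen_lt hcont continuous_const).mem_nhds ?_
        simpa using hδ
      refine ⟨_, mem_nhdsWithin_of_mem_nhds hnhds, ?_⟩
      have h1 := tendsto_iterLim hx r b w
      filter_upwards [Metric.tendsto_nhds.1 h1 (δ / 4) (by linarith)] with k hk p hp
      rw [Real.dist_eq] at hk
      change _ < _ at hp
      have h2 := iterLim_sub_le hx (r + 1) p.2 b p.1 w
      have h3 := iterLim_sub_le hx r (fun i => p.2 (i + 1)) (fun i => b (i + 1))
        (p.1 + p.2 0 • x k) (w + b 0 • x k)
      have h4 : ‖p.1 + p.2 0 • x k - (w + b 0 • x k)‖ ≤ ‖p.1 - w‖ + |p.2 0 - b 0| := by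
        have : p.1 + p.2 0 • x k - (w + b 0 • x k) = (p.1 - w) + (p.2 0 - b 0) • x k := by module
        rw [this]
        refine (norm_add_le _ _).trans ?_
        rw [norm_smul, Real.norm_eq_abs]
        gcongr
        exact mul_le_of_le_one_right (abs_nonneg _) (hx k)
      rw [Finset.sum_range_succ'] at hp h2
      rw [abs_le] at h2 h3
      rw [abs_lt] at hk ⊢
      constructor <;> linarith [h2.1, h2.2, h3.1, h3.2, hk.1, hk.2]
  filter_upwards [key] with k hk v hv a ha
  exact hk (v, a) ⟨hv, fun i _ => abs_le.1 (ha i)⟩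

/-- The set of all `v + b • x k` with `v ∈ V` and `|b| ≤ 1`. -/
def cubeStep (x : ℕ → X) (V : Set X) (k : ℕ) : Set X :=
  (fun p : X × ℝ => p.1 + p.2 • x k) '' (V ×ˢ Set.Icc (-1 : ℝ) 1)

lemma isCompact_cubeStep {V : Set X} (hV : IsCompact V) (k : ℕ) :
    IsCompact (cubeStep x V k) :=
  (hV.prod isCompact_Icc).image (by fun_prop)

lemma subset_cubeStep (V : Set X) (k : ℕ) : V ⊆ cubeStep x V k :=
  fun v hv => ⟨(v, 0), ⟨hv, by simp⟩, by simp⟩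

/-- A subsequence along which one step of the iterated limit is nearly attained, uniformly over
the vectors spanned so far: `V k` contains all combinations of the first `k` chosen vectors with
coefficients in `[-1, 1]`. -/
lemma exists_subseq_close (hx : ∀ k, ‖x k‖ ≤ 1) :
    ∃ (m : ℕ → ℕ) (V : ℕ → Set X), StrictMono m ∧ 0 ∈ V 0 ∧
      (∀ k, V (k + 1) = cubeStep x (V k) (m k)) ∧
      ∀ k, ∀ r < k, ∀ v ∈ V k, ∀ a : ℕ → ℝ, (∀ i, |a i| ≤ 1) →
        |iterLim x r (fun i => a (i + 1)) (v + a 0 • x (m k)) - iterLim x (r + 1) a v|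
          < 1 / ((k : ℝ) + 1) ^ 2 := by
  have hsel : ∀ (V : Set X) (k N : ℕ), ∃ m, N ≤ m ∧ (IsCompact V → ∀ r < k, ∀ v ∈ V,
      ∀ a : ℕ → ℝ, (∀ i, |a i| ≤ 1) →
        |iterLim x r (fun i => a (i + 1)) (v + a 0 • x m) - iterLim x (r + 1) a v|
          < 1 / ((k : ℝ) + 1) ^ 2) := by
    intro V k N
    by_cases hV : IsCompact V
    · have h1 : ∀ᶠ m in (hyperfilter ℕ : Filter ℕ), N ≤ m :=
        Nat.hyperfilter_le_atTop (eventually_ge_atTop N)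
      have h2 := (eventually_all_finset (Finset.range k)).2 fun r _ =>
        eventually_iterLim_close hx hV r (δ := 1 / ((k : ℝ) + 1) ^ 2) (by positivity)
      obtain ⟨m, hm1, hm2⟩ := (h1.and h2).exists
      exact ⟨m, hm1, fun _ r hr => hm2 r (Finset.mem_range.2 hr)⟩
    · exact ⟨N, le_rfl, fun h => absurd h hV⟩
  choose sel hsel1 hsel2 using hsel
  let st : ℕ → Set X × ℕ := fun k => Nat.rec ({0}, 0)
    (fun k p => (cubeStep x p.1 (sel p.1 k p.2), sel p.1 k p.2 + 1)) k
  have hst : ∀ k, st (k + 1) = (cubeStep x (st k).1 (sel (st k).1 k (st k).2),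
    sel (st k).1 k (st k).2 + 1) := fun k => rfl
  have hcomp : ∀ k, IsCompact (st k).1 := by
    intro k
    induction k with
    | zero => exact isCompact_singleton
    | succ k ih => rw [hst]; exact isCompact_cubeStep ih _
  refine ⟨fun k => sel (st k).1 k (st k).2, fun k => (st k).1, strictMono_nat_of_lt_succ fun k => ?_,
    Set.mem_singleton _, fun k => rfl, fun k => hsel2 _ k _ (hcomp k)⟩
  have := hsel1 (st (k + 1)).1 (k + 1) (st (k + 1)).2
  rw [hst] at this ⊢
  exact this

lemma exists_spreadingModel (hx : ∀ k, ‖x k‖ ≤ 1) {C : ℝ} (hC : TailDom C x) :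
    ∃ (m : ℕ → ℕ) (S : Type) (_ : NormedAddCommGroup S) (_ : NormedSpace ℝ S)
      (_ : CompleteSpace S) (s : ℕ → S), StrictMono m ∧
      IsSpreadingModel (fun i => x (m i)) s ∧ ‖s 0 + s 1‖ = iterLim x 2 (fun _ => 1) 0 := by
  obtain ⟨S, i1, i2, i3, f, hf⟩ := exists_banach_of_seminorm (spreadSeminorm x hx)
  obtain ⟨m, V, hm, hV0, hV, hclose⟩ := exists_subseq_close hx
  have hs : ∀ (n : ℕ) (a : ℕ → ℝ),
      ‖∑ i ∈ Finset.range n, a i • f (Finsupp.single i 1)‖ = iterLim x n a 0 := by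
    intro n a
    rw [← spreadSeminorm_sum hx, ← hf]
    simp only [map_sum, map_smul]
  have hmono : ∀ j k, j ≤ k → V j ⊆ V k := fun j k hjk =>
    monotone_nat_of_le_succ (f := V) (fun k => by rw [hV]; exact subset_cubeStep _ _) hjk
  -- telescoping over the successive limits
  have htel : ∀ (n r : ℕ), r ≤ n → ∀ (a : ℕ → ℝ), (∀ i, |a i| ≤ 1) → ∀ (k : ℕ → ℕ) (v : X) (N : ℕ),
      v ∈ V N → (∀ i < r, n ≤ k i ∧ N ≤ k i) → (∀ i j, i < j → j < r → k i < k j) →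
      |‖v + ∑ i ∈ Finset.range r, a i • x (m (k i))‖ - iterLim x r a v|
        ≤ r * (1 / ((n : ℝ) + 1) ^ 2) := by
    intro n r
    induction r with
    | zero => intro _ a _ k v N _ _ _; simp [iterLim]
    | succ r ih =>
      intro hrn a ha k v N hv hk hkm
      have hk0 := hk 0 (by omega)
      have hv' : v + a 0 • x (m (k 0)) ∈ V (k 0 + 1) := by
        rw [hV]
        exact ⟨(v, a 0), ⟨hmono _ _ hk0.2 hv, abs_le.1 (ha 0)⟩, rfl⟩
      have h1 := ih (by omega) (fun i => a (i + 1)) (fun i => ha _) (fun i => k (i + 1)) _ _ hv'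
        (fun i hi => ⟨(hk (i + 1) (by omega)).1, hkm 0 (i + 1) (by omega) (by omega)⟩)
        (fun i j hij hj => hkm _ _ (by omega) (by omega))
      have h2 := hclose (k 0) r (by omega) v (hmono _ _ hk0.2 hv) a ha
      have h3 : 1 / ((k 0 : ℝ) + 1) ^ 2 ≤ 1 / ((n : ℝ) + 1) ^ 2 := by
        have : (n : ℝ) ≤ k 0 := by exact_mod_cast hk0.1
        gcongr
      rw [Finset.sum_range_succ', add_comm (∑ i ∈ Finset.range r, _), ← add_assoc]
      push_cast
      rw [abs_le] at h1 ⊢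
      rw [abs_lt] at h2
      constructor <;> linarith [h1.1, h1.2, h2.1, h2.2]
  refine ⟨m, S, i1, i2, i3, fun i => f (Finsupp.single i 1), hm, ⟨⟨C, ?_⟩, ?_⟩, ?_⟩
  · intro p q hpq a
    rw [hs, hs]
    exact iterLim_le_mul hx hC p q a 0 0 (Submodule.zero_mem _) hpq
  · refine ⟨fun n => 1 / ((n : ℝ) + 1), fun n => by positivity, ?_,
      tendsto_one_div_add_atTop_nhds_zero_nat, ?_⟩
    · intro p q hpq
      dsimp only
      gcongr
    · intro n a ha k hk hkn
      let a' : ℕ → ℝ := fun i => if h : i < n then a ⟨i, h⟩ else 0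
      let k' : ℕ → ℕ := fun i => if h : i < n then k ⟨i, h⟩ else 0
      have ha' : ∀ i : Fin n, a' i = a i := fun i => by simp [a']
      have hk' : ∀ i : Fin n, k' i = k i := fun i => by simp [k']
      have h1 := htel n n le_rfl a' (fun i => by
          dsimp only [a']
          split_ifs with h
          · exact ha _
          · simp) k' 0 0 hV0
        (fun i hi => ⟨by simpa [k', hi] using hkn ⟨i, hi⟩, by omega⟩)
        (fun i j hij hj => by
          have hi : i < n := by omega
          simp only [k', hi, hj, dif_pos]
          exact hk hij)
      rw [← hs, Finset.sum_range, Finset.sum_range, zero_add] at h1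
      simp only [ha', hk'] at h1
      refine h1.trans_lt ?_
      rw [mul_one_div, div_lt_div_iff₀ (by positivity) (by positivity)]
      nlinarith [(n.cast_nonneg : (0 : ℝ) ≤ n)]
  · have := hs 2 (fun _ => 1)
    simpa [Finset.sum_range_succ] using this

/-! ### Convex block sequences with norms tending to one -/

/-- `y` is a convex block subsequence of `e` whose norms tend to `1`. The coefficients are encoded
by membership in convex hulls over successive finite sets of indices. -/
def GoodSeq (e y : ℕ → X) : Prop :=
  ∃ A : ℕ → Finset ℕ, (∀ i, (A i).Nonempty) ∧
    (∀ i j, i < j → ∀ p ∈ A i, ∀ q ∈ A j, p < q) ∧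
    (∀ i, y i ∈ convexHull ℝ (e '' (A i : Set ℕ))) ∧
    Tendsto (fun i => ‖y i‖) atTop (𝓝 1)

variable {e : ℕ → X}

lemma exists_weights {A : Finset ℕ} {v : X} (hv : v ∈ convexHull ℝ (e '' (A : Set ℕ))) :
    ∃ w : ℕ → ℝ, (∀ j ∈ A, 0 ≤ w j) ∧ ∑ j ∈ A, w j = 1 ∧ v = ∑ j ∈ A, w j • e j := by
  refine convexHull_min (t := {v | ∃ w : ℕ → ℝ, (∀ j ∈ A, 0 ≤ w j) ∧ ∑ j ∈ A, w j = 1 ∧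
    v = ∑ j ∈ A, w j • e j}) ?_ ?_ hv
  · rintro _ ⟨j, hj, rfl⟩
    have hj' : j ∈ A := hj
    refine ⟨Pi.single j 1, fun i _ => ?_, ?_, ?_⟩
    · by_cases h : i = j
      · subst h; simp
      · simp [h]
    · simp [hj']
    · simp [Pi.single_apply, ite_smul, hj']
  · rintro _ ⟨w, hw, hw1, rfl⟩ _ ⟨w', hw', hw1', rfl⟩ a b ha hb hab
    refine ⟨fun j => a * w j + b * w' j, fun j hj => ?_, ?_, ?_⟩
    · have := hw j hj
      have := hw' j hj
      positivity
    · rw [Finset.sum_add_distrib, ← Finset.mul_sum, ← Finset.mul_sum, hw1, hw1']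
      linarith
    · simp only [add_smul, mul_smul, Finset.sum_add_distrib, Finset.smul_sum]

lemma exists_finset_convexHull {I : Set ℕ} {v : X} (hv : v ∈ convexHull ℝ (e '' I)) :
    ∃ A : Finset ℕ, (A : Set ℕ) ⊆ I ∧ A.Nonempty ∧ v ∈ convexHull ℝ (e '' (A : Set ℕ)) := by
  classical
  rw [convexHull_eq_union_convexHull_finite_subsets] at hv
  simp only [Set.mem_iUnion] at hv
  obtain ⟨t, ht, hvt⟩ := hv
  obtain ⟨A, hA, rfl⟩ := Finset.subset_set_image_iff.1 ht
  rw [Finset.coe_image] at hvt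
  refine ⟨A, hA, ?_, hvt⟩
  rw [Finset.nonempty_iff_ne_empty]
  rintro rfl
  simp at hvt

lemma norm_le_one_of_mem (hnorm : ∀ i, ‖e i‖ = 1) {I : Set ℕ} {v : X}
    (hv : v ∈ convexHull ℝ (e '' I)) : ‖v‖ ≤ 1 := by
  have : v ∈ Metric.closedBall (0 : X) 1 := by
    refine convexHull_min ?_ (convex_closedBall _ _) hv
    rintro _ ⟨i, -, rfl⟩
    simp [hnorm]
  simpa using this

lemma GoodSeq.comp {y : ℕ → X} (hy : GoodSeq e y) {m : ℕ → ℕ} (hm : StrictMono m) :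
    GoodSeq e (fun i => y (m i)) := by
  obtain ⟨A, h1, h2, h3, h4⟩ := hy
  exact ⟨fun i => A (m i), fun i => h1 _, fun i j hij => h2 _ _ (hm hij), fun i => h3 _,
    h4.comp hm.tendsto_atTop⟩

lemma GoodSeq.isConvexBlockSubseq {y : ℕ → X} (hy : GoodSeq e y) : IsConvexBlockSubseq e y := by
  classical
  obtain ⟨A, h1, h2, h3, -⟩ := hy
  choose w hw0 hw1 hwy using fun i => exists_weights (h3 i)
  -- the sets `A i` are disjoint, so the weights glue to one coefficient sequence
  have huniq : ∀ i i' j, j ∈ A i → j ∈ A i' → i = i' := by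
    intro i i' j hj hj'
    rcases lt_trichotomy i i' with h | h | h
    · exact absurd (h2 _ _ h _ hj _ hj') (lt_irrefl _)
    · exact h
    · exact absurd (h2 _ _ h _ hj' _ hj) (lt_irrefl _)
  let c : ℕ → ℝ := fun j => if h : ∃ i, j ∈ A i then w h.choose j else 0
  have hc : ∀ i, ∀ j ∈ A i, c j = w i j := by
    intro i j hj
    have hex : ∃ i, j ∈ A i := ⟨i, hj⟩
    simp only [c, dif_pos hex]
    rw [huniq _ _ _ hex.choose_spec hj]
  refine ⟨A, c, h1, fun i => h2 _ _ (Nat.lt_succ_self i), fun i j hj => ?_, fun i => ?_,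
    fun i => ?_⟩
  · rw [hc i j hj]; exact hw0 i j hj
  · rw [Finset.sum_congr rfl (hc i)]; exact hw1 i
  · rw [hwy i]
    exact Finset.sum_congr rfl fun j hj => by rw [hc i j hj]

lemma GoodSeq.tailDom {y : ℕ → X} (hy : GoodSeq e y) {C : ℝ} (hC : TailDom C e) (c : ℕ → ℝ) :
    TailDom C (fun i => c i • y i) := by
  obtain ⟨A, h1, h2, h3, -⟩ := hy
  intro N v hv u hu
  have hhull : ∀ (i : ℕ) (I : Set ℕ), (A i : Set ℕ) ⊆ I → c i • y i ∈ Submodule.span ℝ (e '' I) := by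
    intro i I hI
    refine Submodule.smul_mem _ _ ?_
    exact convexHull_min ((Set.image_mono hI).trans Submodule.subset_span)
      (Submodule.convex _) (h3 i)
  refine hC ((A N).min' (h1 N)) v ?_ u ?_
  · refine Submodule.span_le.2 ?_ hv
    rintro _ ⟨i, hi, rfl⟩
    exact hhull i _ fun p hp => h2 i N hi p hp _ (Finset.min'_mem _ _)
  · refine Submodule.span_le.2 ?_ hu
    rintro _ ⟨i, hi, rfl⟩
    refine hhull i _ fun p hp => ?_
    rcases (show N ≤ i from hi).eq_or_lt with rfl | hlt
    · exact Finset.min'_le _ _ hp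
    · exact (h2 N i hlt _ (Finset.min'_mem _ _) p hp).le

/-- Every convex block sequence with norms tending to `1` has pairs arbitrarily far out whose
midpoints have norm close to `1`. -/
def HasPairs (e : ℕ → X) : Prop :=
  ∀ y : ℕ → X, GoodSeq e y → ∀ (N : ℕ) (η : ℝ), 0 < η →
    ∃ i j, N ≤ i ∧ i < j ∧ 1 - η < ‖(1 / 2 : ℝ) • (y i + y j)‖

/-- The spreading model hypothesis enters only here. -/
lemma hasPairs_of_spreadingModel [CompleteSpace X] (he : IsSchauderBasis e)
    (h : ∀ y : ℕ → X, IsConvexBlockSubseq e y →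
      ∀ L : ℝ, 0 < L → Filter.Tendsto (fun i => ‖y i‖) Filter.atTop (nhds L) →
      ∀ (S : Type) [NormedAddCommGroup S] [NormedSpace ℝ S] [CompleteSpace S]
        (s : ℕ → S), IsSpreadingModel (fun i => ‖y i‖⁻¹ • y i) s → ‖s 0 + s 1‖ = 2) :
    HasPairs e := by
  intro y hy N η hη
  obtain ⟨C, -, hC⟩ := exists_tailDom he
  have hx : ∀ i, ‖‖y i‖⁻¹ • y i‖ ≤ 1 := by
    intro i
    rw [norm_smul, norm_inv, norm_norm]
    exact inv_mul_le_one
  obtain ⟨m, S, i1, i2, i3, s, hm, hs, hs2⟩ :=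
    exists_spreadingModel hx (hy.tailDom hC fun i => ‖y i‖⁻¹)
  have hym := hy.comp hm
  have hlim : iterLim (fun i => ‖y i‖⁻¹ • y i) 2 (fun _ => 1) 0 = 2 := by
    rw [← hs2]
    exact h _ hym.isConvexBlockSubseq 1 one_pos hym.choose_spec.2.2.2 S s hs
  have hdiff : ∀ i, ‖‖y i‖⁻¹ • y i - y i‖ ≤ |1 - ‖y i‖| := by
    intro i
    by_cases h0 : y i = 0
    · simp [h0]
    · have h0' : ‖y i‖ ≠ 0 := norm_ne_zero_iff.2 h0
      have : ‖y i‖⁻¹ • y i - y i = (‖y i‖⁻¹ - 1) • y i := by module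
      rw [this, norm_smul, Real.norm_eq_abs, ← abs_norm (y i), ← abs_mul, abs_norm, sub_mul,
        inv_mul_cancel₀ h0', one_mul]
  have hnear : ∀ᶠ i in (hyperfilter ℕ : Filter ℕ), |1 - ‖y i‖| < η / 2 := by
    refine Nat.hyperfilter_le_atTop ?_
    have := Metric.tendsto_nhds.1 hy.choose_spec.2.2.2 (η / 2) (by linarith)
    filter_upwards [this] with i hi
    rwa [Real.dist_eq, abs_sub_comm] at hi
  have hge : ∀ M : ℕ, ∀ᶠ k in (hyperfilter ℕ : Filter ℕ), M ≤ k := fun M =>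
    Nat.hyperfilter_le_atTop (eventually_ge_atTop M)
  have h1 := tendsto_iterLim hx 1 (fun _ => 1) 0
  rw [hlim] at h1
  obtain ⟨i, ⟨hi1, hi2⟩, hi3⟩ :=
    ((h1.eventually_const_lt (show 2 - η < 2 by linarith)).and hnear |>.and (hge N)).exists
  have h2 := tendsto_iterLim hx 0 (fun _ => 1) (0 + (1 : ℝ) • ‖y i‖⁻¹ • y i)
  obtain ⟨j, ⟨hj1, hj2⟩, hj3⟩ :=
    ((h2.eventually_const_lt hi1).and hnear |>.and (hge (i + 1))).exists
  refine ⟨i, j, hi3, hj3, ?_⟩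
  have hj1' : 2 - η < ‖‖y i‖⁻¹ • y i + ‖y j‖⁻¹ • y j‖ := by
    simpa only [iterLim, zero_add, one_smul] using hj1
  have htri : ‖‖y i‖⁻¹ • y i + ‖y j‖⁻¹ • y j‖ ≤
      ‖y i + y j‖ + (‖‖y i‖⁻¹ • y i - y i‖ + ‖‖y j‖⁻¹ • y j - y j‖) := by
    refine le_trans (le_of_eq ?_) ((norm_add_le _ _).trans (add_le_add_right (norm_add_le _ _) _))
    congr 1
    abel
  have := hdiff i
  have := hdiff j
  rw [norm_smul, Real.norm_eq_abs, abs_of_pos (by norm_num : (0 : ℝ) < 1 / 2)]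
  linarith

lemma tendsto_norm_of_lower_bound (hnorm : ∀ i, ‖e i‖ = 1) {y : ℕ → X} {A : ℕ → Finset ℕ}
    (h3 : ∀ i, y i ∈ convexHull ℝ (e '' (A i : Set ℕ)))
    (h4 : ∀ i : ℕ, 1 - 1 / ((i : ℝ) + 1) < ‖y i‖) : Tendsto (fun i => ‖y i‖) atTop (𝓝 1) := by
  refine tendsto_of_tendsto_of_tendsto_of_le_of_le
    (g := fun i : ℕ => 1 - 1 / ((i : ℝ) + 1)) ?_ tendsto_const_nhds (fun i => (h4 i).le)
    fun i => norm_le_one_of_mem hnorm (h3 i)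
  simpa using (tendsto_one_div_add_atTop_nhds_zero_nat (𝕜 := ℝ)).const_sub 1

lemma GoodSeq.halve (hp : HasPairs e) (hnorm : ∀ i, ‖e i‖ = 1) {y : ℕ → X} (hy : GoodSeq e y) :
    ∃ p q : ℕ → ℕ, (∀ i, p i < q i) ∧ (∀ i j, i < j → q i < p j) ∧
      GoodSeq e (fun i => (1 / 2 : ℝ) • (y (p i) + y (q i))) := by
  classical
  choose P Q hP hPQ hn using hp y hy
  let b : ℕ → ℕ := fun n => Nat.rec 0
    (fun n N => Q N (1 / ((n : ℝ) + 1)) (by positivity) + 1) n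
  have hb : ∀ n, b (n + 1) = Q (b n) (1 / ((n : ℝ) + 1)) (by positivity) + 1 := fun n => rfl
  let p : ℕ → ℕ := fun n => P (b n) (1 / ((n : ℝ) + 1)) (by positivity)
  let q : ℕ → ℕ := fun n => Q (b n) (1 / ((n : ℝ) + 1)) (by positivity)
  have hpq : ∀ i, p i < q i := fun i => hPQ _ _ _
  have hbp : ∀ i, b i ≤ p i := fun i => hP _ _ _
  have hqb : ∀ i, b (i + 1) = q i + 1 := hb
  have hbm : Monotone b := monotone_nat_of_le_succ fun n => by
    have := hpq n; have := hbp n; have := hqb n; omega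
  have hqp : ∀ i j, i < j → q i < p j := by
    intro i j hij
    have h1 := hbm (show i + 1 ≤ j from hij)
    have := hqb i; have := hbp j
    omega
  refine ⟨p, q, hpq, hqp, ?_⟩
  obtain ⟨A, h1, h2, h3, h4⟩ := hy
  have h3' : ∀ i, (1 / 2 : ℝ) • (y (p i) + y (q i)) ∈
      convexHull ℝ (e '' ((A (p i) ∪ A (q i) : Finset ℕ) : Set ℕ)) := by
    intro i
    rw [smul_add]
    refine convex_convexHull ℝ _ ?_ ?_ (by norm_num) (by norm_num) (by norm_num)
    · exact convexHull_mono (Set.image_mono (by simp)) (h3 (p i))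
    · exact convexHull_mono (Set.image_mono (by simp)) (h3 (q i))
  refine ⟨fun i => A (p i) ∪ A (q i), fun i => (h1 _).mono Finset.subset_union_left, ?_, h3',
    tendsto_norm_of_lower_bound hnorm h3' fun i => hn _ _ _⟩
  intro i j hij a ha c hc
  have hqp' := hqp i j hij
  have := hpq i; have := hpq j
  rcases Finset.mem_union.1 ha with ha | ha <;> rcases Finset.mem_union.1 hc with hc | hc <;>
    exact h2 _ _ (by omega) _ ha _ hc

/-- If every `f ∈ K` exceeds the level `θ` at no more than one term of `y`, and there by no more
than `t`, then repeated averaging of pairs makes the excess as small as `t / 2 ^ k` while keeping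
the norms close to `1`. -/
lemma GoodSeq.iterate_halve (hp : HasPairs e) (hnorm : ∀ i, ‖e i‖ = 1) {K : Set (X →L[ℝ] ℝ)}
    {θ t : ℝ} {C : Set X} (hC : Convex ℝ C) {y : ℕ → X}
    (hy : GoodSeq e y) (hyC : ∀ i, y i ∈ C) (hyt : ∀ f ∈ K, (∀ i, f (y i) ≤ θ + t) ∧
      ∀ i j, i < j → f (y i) ≤ θ ∨ f (y j) ≤ θ) (k : ℕ) :
    ∃ z : ℕ → X, GoodSeq e z ∧ (∀ i, z i ∈ C) ∧ ∀ f ∈ K, (∀ i, f (z i) ≤ θ + t / 2 ^ k) ∧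
      ∀ i j, i < j → f (z i) ≤ θ ∨ f (z j) ≤ θ := by
  induction k with
  | zero => exact ⟨y, hy, hyC, by simpa using hyt⟩
  | succ k ih =>
    obtain ⟨z, hz, hzC, hzt⟩ := ih
    obtain ⟨p, q, hpq, hqp, hgood⟩ := hz.halve hp hnorm
    refine ⟨_, hgood, fun i => ?_, fun f hf => ⟨fun i => ?_, fun i j hij => ?_⟩⟩
    · rw [smul_add]
      exact hC (hzC _) (hzC _) (by norm_num) (by norm_num) (by norm_num)
    · simp only [map_smul, map_add, smul_eq_mul]
      have e1 : t / 2 ^ (k + 1) = t / 2 ^ k / 2 := by rw [pow_succ, div_div]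
      rw [e1]
      have h1 := (hzt f hf).1 (p i)
      have h2 := (hzt f hf).1 (q i)
      rcases (hzt f hf).2 _ _ (hpq i) with h | h <;> linarith
    · simp only [map_smul, map_add, smul_eq_mul]
      have h1 := hqp i j hij
      have h2 := hpq i
      have h3 := hpq j
      have a1 := (hzt f hf).2 (p i) (p j) (by omega)
      have a2 := (hzt f hf).2 (p i) (q j) (by omega)
      have a3 := (hzt f hf).2 (q i) (p j) (by omega)
      have a4 := (hzt f hf).2 (q i) (q j) (by omega)
      by_cases hc1 : f (z (p i)) ≤ θ
      · by_cases hc2 : f (z (q i)) ≤ θ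
        · left; linarith
        · right
          have := a3.resolve_left hc2; have := a4.resolve_left hc2
          linarith
      · right
        have := a1.resolve_left hc1; have := a2.resolve_left hc1
        linarith

/-! ### The well-founded induction -/

/-- `C` contains, arbitrarily far out, convex combinations of the `e i` of norm close to `1`. -/
def Rich (e : ℕ → X) (C : Set X) : Prop :=
  ∀ (N : ℕ) (η : ℝ), 0 < η → ∃ v ∈ C, v ∈ convexHull ℝ (e '' {i | N ≤ i}) ∧ 1 - η < ‖v‖

/-- The functionals in the dual unit ball that are at least `θ` at `e m` for every `m ∈ F`. -/
def highSet (e : ℕ → X) (θ : ℝ) (F : Finset ℕ) : Set (X →L[ℝ] ℝ) :=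
  {f | ‖f‖ ≤ 1 ∧ ∀ m ∈ F, θ ≤ f (e m)}

/-- The vectors at which no functional in `highSet e θ F` exceeds `θ + η`. -/
def lowSet (e : ℕ → X) (θ : ℝ) (F : Finset ℕ) (η : ℝ) : Set X :=
  {v | ∀ f ∈ highSet e θ F, f v ≤ θ + η}

/-- Every rich convex set stays rich after intersecting it with any `lowSet e θ F η`. -/
def Avoidable (e : ℕ → X) (θ : ℝ) (F : Finset ℕ) : Prop :=
  ∀ C : Set X, Convex ℝ C → Rich e C → ∀ η : ℝ, 0 < η → Rich e (C ∩ lowSet e θ F η)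

lemma convex_lowSet (e : ℕ → X) (θ : ℝ) (F : Finset ℕ) (η : ℝ) : Convex ℝ (lowSet e θ F η) := by
  intro v hv w hw a b ha hb hab f hf
  have h1 := hv f hf
  have h2 := hw f hf
  simp only [map_add, map_smul, smul_eq_mul]
  calc a * f v + b * f w ≤ a * (θ + η) + b * (θ + η) := by gcongr
    _ = θ + η := by rw [← add_mul, hab, one_mul]

/-- The inductive step. Blocks `y 0, y 1, …` are chosen so that `y j` avoids `insert m F` for each
`m` in the support of an earlier block. A functional in `highSet e θ F` that exceeds `θ` on some
`y i` is at least `θ` at some `e m` with `m` in the support of `y i`, so it stays low on all later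
blocks; averaging then makes it low everywhere. -/
lemma avoidable_of_insert (hp : HasPairs e) (hnorm : ∀ i, ‖e i‖ = 1) {θ : ℝ} (hθ : θ < 1)
    {F : Finset ℕ} {N₀ : ℕ} (hF : ∀ m, N₀ ≤ m → Avoidable e θ (insert m F)) :
    Avoidable e θ F := by
  classical
  intro C hC hrich η hη N η' hη'
  let D : Finset ℕ → Set X := fun B =>
    {v | v ∈ C ∧ ∀ m ∈ B, N₀ ≤ m → v ∈ lowSet e θ (insert m F) (η / 2)}
  have hD : ∀ B, Convex ℝ (D B) ∧ Rich e (D B) := by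
    intro B
    induction B using Finset.induction_on with
    | empty => simpa [D] using ⟨hC, hrich⟩
    | insert m B hm ih =>
      by_cases hmN : N₀ ≤ m
      · have : D (insert m B) = D B ∩ lowSet e θ (insert m F) (η / 2) := by
          ext v
          simp only [D, Finset.mem_insert, forall_eq_or_imp, Set.mem_ofPred_eq, Set.mem_inter_iff,
            hmN, true_imp_iff]
          tauto
        rw [this]
        exact ⟨ih.1.inter (convex_lowSet _ _ _ _), hF m hmN _ ih.1 ih.2 _ (by linarith)⟩
      · have : D (insert m B) = D B := by
          ext v
          simp only [D, Finset.mem_insert, forall_eq_or_imp, Set.mem_ofPred_eq, hmN]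
          tauto
        rw [this]
        exact ih
  have hsel : ∀ (B : Finset ℕ) (n : ℕ), ∃ (v : X) (A : Finset ℕ), v ∈ D B ∧ A.Nonempty ∧
      (∀ a ∈ A, N₀ ≤ a ∧ N ≤ a ∧ ∀ b ∈ B, b < a) ∧ v ∈ convexHull ℝ (e '' (A : Set ℕ)) ∧
      1 - 1 / ((n : ℝ) + 1) < ‖v‖ := by
    intro B n
    obtain ⟨v, hv, hvh, hvn⟩ := (hD B).2 (max (max N₀ N) (B.sup id + 1)) (1 / ((n : ℝ) + 1))
      (by positivity)
    obtain ⟨A, hA, hAne, hvA⟩ := exists_finset_convexHull hvh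
    refine ⟨v, A, hv, hAne, fun a ha => ?_, hvA, hvn⟩
    have h1 : max (max N₀ N) (B.sup id + 1) ≤ a := hA ha
    simp only [max_le_iff] at h1
    refine ⟨h1.1.1, h1.1.2, fun b hb => ?_⟩
    have := Finset.le_sup (f := id) hb
    simp only [id] at this
    omega
  choose sv sA hsD hsne hsA hsh hsn using hsel
  let B : ℕ → Finset ℕ := fun n => Nat.rec ∅ (fun n B => B ∪ sA B n) n
  have hB : ∀ n, B (n + 1) = B n ∪ sA (B n) n := fun n => rfl
  have hBm : Monotone B := monotone_nat_of_le_succ fun n => by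
    rw [hB]; exact Finset.subset_union_left
  have hAB : ∀ i j, i < j → sA (B i) i ⊆ B j := fun i j hij =>
    (show sA (B i) i ⊆ B (i + 1) by rw [hB]; exact Finset.subset_union_right).trans (hBm hij)
  let y : ℕ → X := fun n => sv (B n) n
  have hy : GoodSeq e y := ⟨fun n => sA (B n) n, fun n => hsne _ _,
    fun i j hij p hp q hq => (hsA _ _ q hq).2.2 p (hAB i j hij hp), fun n => hsh _ _,
    tendsto_norm_of_lower_bound hnorm (fun n => hsh (B n) n) fun n => hsn _ _⟩
  have hyf : ∀ f ∈ highSet e θ F, (∀ i, f (y i) ≤ (θ + η / 2) + (1 - θ)) ∧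
      ∀ i j, i < j → f (y i) ≤ θ + η / 2 ∨ f (y j) ≤ θ + η / 2 := by
    intro f hf
    refine ⟨fun i => ?_, fun i j hij => ?_⟩
    · have h1 := norm_le_one_of_mem hnorm (hsh (B i) i)
      have h2 := (le_abs_self _).trans (f.le_opNorm (y i))
      have h3 : ‖f‖ * ‖y i‖ ≤ 1 := mul_le_one₀ hf.1 (norm_nonneg _) h1
      linarith
    · by_cases hex : ∃ m ∈ sA (B i) i, θ ≤ f (e m)
      · right
        obtain ⟨m, hm, hmθ⟩ := hex
        refine (hsD (B j) j).2 m (hAB i j hij hm) (hsA _ _ m hm).1 f ⟨hf.1, fun k hk => ?_⟩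
        rcases Finset.mem_insert.1 hk with rfl | hk
        · exact hmθ
        · exact hf.2 k hk
      · left
        push Not at hex
        have : y i ∈ {v : X | f v ≤ θ} := by
          refine convexHull_min ?_ (convex_halfSpace_le f.toLinearMap.isLinear θ) (hsh (B i) i)
          rintro _ ⟨m, hm, rfl⟩
          exact (hex m hm).le
        have h1 : f (y i) ≤ θ := this
        linarith
  obtain ⟨k, hk⟩ := exists_pow_lt_of_lt_one (show 0 < η / 2 / (1 - θ) from
    div_pos (by linarith) (by linarith)) (show (1 / 2 : ℝ) < 1 by norm_num)
  have hk' : (1 - θ) / 2 ^ k < η / 2 := by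
    rw [lt_div_iff₀ (by linarith)] at hk
    rw [one_div, inv_pow] at hk
    rw [div_eq_inv_mul]
    exact hk
  obtain ⟨z, hz, hzC, hzf⟩ := hy.iterate_halve hp hnorm
    (hC.inter (convex_convexHull ℝ (e '' {i | N ≤ i})))
    (fun i => ⟨(hsD (B i) i).1, convexHull_mono (Set.image_mono fun a ha => (hsA _ _ a ha).2.1)
      (hsh (B i) i)⟩) hyf k
  obtain ⟨i, hi⟩ := (hz.choose_spec.2.2.2.eventually_const_lt
    (show 1 - η' < 1 by linarith)).exists
  refine ⟨z i, ⟨(hzC i).1, fun f hf => ?_⟩, (hzC i).2, hi⟩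
  have := (hzf f hf).1 i
  linarith

lemma not_avoidable_empty [Nontrivial X] (hnorm : ∀ i, ‖e i‖ = 1) {θ : ℝ} (hθ : θ < 1) :
    ¬ Avoidable e θ ∅ := by
  intro hav
  have hrich : Rich e Set.univ := fun N η hη =>
    ⟨e N, trivial, subset_convexHull ℝ _ ⟨N, le_refl N, rfl⟩, by rw [hnorm]; linarith⟩
  obtain ⟨v, hv, -, hvn⟩ := hav Set.univ convex_univ hrich ((1 - θ) / 2) (by linarith) 0
    ((1 - θ) / 2) (by linarith)
  obtain ⟨f, hf, hfv⟩ := exists_dual_vector' ℝ v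
  have h1 := hv.2 f ⟨hf.le, by simp⟩
  rw [hfv] at h1
  simp only [RCLike.ofReal_real_eq_id, id] at h1
  linarith

/-- Nested nonempty `highSet`s have a common point, by weak-* compactness of the dual ball. -/
lemma exists_mem_highSet {θ : ℝ} {F : ℕ → Finset ℕ} (hF : Monotone F)
    (hne : ∀ n, (highSet e θ (F n)).Nonempty) : ∃ f, ∀ n, f ∈ highSet e θ (F n) := by
  let K : ℕ → Set (WeakDual ℝ X) := fun n =>
    (WeakDual.toStrongDual ⁻¹' Metric.closedBall (0 : StrongDual ℝ X) 1) ∩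
      ⋂ m ∈ F n, {φ : WeakDual ℝ X | θ ≤ φ (e m)}
  have hcl : ∀ n, IsClosed (K n) := fun n =>
    (WeakDual.isClosed_closedBall (𝕜 := ℝ) (E := X) 0 1).inter (isClosed_biInter fun m _ =>
      isClosed_le continuous_const (WeakDual.eval_continuous (e m)))
  have hmem : ∀ (n : ℕ) (f : X →L[ℝ] ℝ),
      StrongDual.toWeakDual f ∈ K n ↔ f ∈ highSet e θ (F n) := by
    intro n f
    simp [K, highSet]
  have hcomp : IsCompact (K 0) :=
    (WeakDual.isCompact_closedBall (0 : StrongDual ℝ X) 1).of_isClosed_subset (hcl 0)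
      Set.inter_subset_left
  obtain ⟨φ, hφ⟩ := IsCompact.nonempty_iInter_of_sequence_nonempty_isCompact_isClosed K
    (fun n => Set.inter_subset_inter_right _
      (Set.biInter_subset_biInter_left (hF (Nat.le_succ n))))
    (fun n => (hne n).elim fun f hf => ⟨StrongDual.toWeakDual f, (hmem n f).2 hf⟩) hcomp hcl
  refine ⟨WeakDual.toStrongDual φ, fun n => (hmem n _).1 (Set.mem_iInter.1 hφ n)⟩

/-- Since `∅` is not avoidable, the inductive step yields an infinite branch of non-avoidable
sets, along which the `highSet`s are nonempty. -/
lemma exists_branch (hp : HasPairs e) (hnorm : ∀ i, ‖e i‖ = 1) {θ : ℝ} (hθ : θ < 1) :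
    ∃ (m : ℕ → ℕ) (f : X →L[ℝ] ℝ), StrictMono m ∧ ‖f‖ ≤ 1 ∧ ∀ i, θ ≤ f (e (m i)) := by
  classical
  have : Nontrivial X := ⟨e 0, 0, fun h => by simpa [h] using hnorm 0⟩
  have hstep : ∀ F : Finset ℕ, ∃ m, F.sup id + 1 ≤ m ∧
      (¬ Avoidable e θ F → ¬ Avoidable e θ (insert m F)) := by
    intro F
    by_contra! hcon
    exact (hcon _ le_rfl).1 (avoidable_of_insert hp hnorm hθ (N₀ := F.sup id + 1)
      fun m hm => (hcon m hm).2)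
  choose g hg1 hg2 using hstep
  let F : ℕ → Finset ℕ := fun n => Nat.rec ∅ (fun _ F => insert (g F) F) n
  have hFs : ∀ n, F (n + 1) = insert (g (F n)) (F n) := fun n => rfl
  have hnav : ∀ n, ¬ Avoidable e θ (F n) := by
    intro n
    induction n with
    | zero => exact not_avoidable_empty hnorm hθ
    | succ n ih => rw [hFs]; exact hg2 _ ih
  have hmono : Monotone F := monotone_nat_of_le_succ fun n => by
    rw [hFs]; exact Finset.subset_insert _ _
  have hmemF : ∀ n, g (F n) ∈ F (n + 1) := fun n => by rw [hFs]; exact Finset.mem_insert_self _ _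
  obtain ⟨f, hf⟩ := exists_mem_highSet (e := e) (θ := θ) hmono fun n => by
    by_contra hempty
    rw [Set.not_nonempty_iff_eq_empty] at hempty
    refine hnav n fun C _ hrich η _ => ?_
    have : lowSet e θ (F n) η = Set.univ := by
      simp [lowSet, hempty]
    rwa [this, Set.inter_univ]
  refine ⟨fun n => g (F n), f, strictMono_nat_of_lt_succ fun n => ?_, (hf 0).1,
    fun n => (hf (n + 1)).2 _ (hmemF n)⟩
  have h1 := Finset.le_sup (f := id) (hmemF n)
  have h2 := hg1 (F (n + 1))
  simp only [id] at h1
  omega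

end Aux

/-- Let `(e_i)` be a normalized Schauder basis of a Banach space `X` such that for
every convex block subsequence `(y_i)` of `(e_i)` whose norms converge to a positive
limit, every spreading model `(s_n)` of the normalized sequence `x_i = y_i / ‖y_i‖`
satisfies `‖s 0 + s 1‖ = 2`.  Then `(e_i)` is not weakly null, and moreover for every
`ε > 0` there are a strictly increasing sequence `(m_i)` and a norm-one functional
`x*` with `x*(e_{m_i}) > 1 - ε` for all `i`. -/
theorem stmt3 {X : Type*} [NormedAddCommGroup X] [NormedSpace ℝ X] [CompleteSpace X]
    (e : ℕ → X) (he : IsSchauderBasis e) (hnorm : ∀ i, ‖e i‖ = 1)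
    (h : ∀ y : ℕ → X, IsConvexBlockSubseq e y →
      ∀ L : ℝ, 0 < L → Filter.Tendsto (fun i => ‖y i‖) Filter.atTop (nhds L) →
      ∀ (S : Type) [NormedAddCommGroup S] [NormedSpace ℝ S] [CompleteSpace S]
        (s : ℕ → S), IsSpreadingModel (fun i => ‖y i‖⁻¹ • y i) s → ‖s 0 + s 1‖ = 2) :
    (¬ ∀ f : X →L[ℝ] ℝ, Filter.Tendsto (fun i => f (e i)) Filter.atTop (nhds 0)) ∧
    ∀ ε : ℝ, 0 < ε → ∃ (m : ℕ → ℕ) (f : X →L[ℝ] ℝ),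
      StrictMono m ∧ ‖f‖ = 1 ∧ ∀ i, f (e (m i)) > 1 - ε := by
  have hp := hasPairs_of_spreadingModel he h
  have hmain : ∀ ε : ℝ, 0 < ε → ∃ (m : ℕ → ℕ) (f : X →L[ℝ] ℝ),
      StrictMono m ∧ ‖f‖ = 1 ∧ ∀ i, f (e (m i)) > 1 - ε := by
    intro ε hε
    have hδ : 0 < min ε 1 / 2 := by positivity
    have hδ1 : min ε 1 ≤ 1 := min_le_right _ _
    have hδε : min ε 1 ≤ ε := min_le_left _ _
    obtain ⟨m, f, hm, hf1, hf⟩ := exists_branch hp hnorm (θ := 1 - min ε 1 / 2) (by linarith)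
    have hf0 : 0 < ‖f‖ := by
      rw [norm_pos_iff]
      rintro rfl
      have := hf 0
      simp only [zero_apply] at this
      linarith
    refine ⟨m, ‖f‖⁻¹ • f, hm, ?_, fun i => ?_⟩
    · rw [norm_smul, norm_inv, norm_norm, inv_mul_cancel₀ hf0.ne']
    · have h1 : f (e (m i)) ≤ ‖f‖⁻¹ * f (e (m i)) :=
        le_mul_of_one_le_left (by linarith [hf i]) ((one_le_inv₀ hf0).2 hf1)
      have h2 : (‖f‖⁻¹ • f) (e (m i)) = ‖f‖⁻¹ * f (e (m i)) := rfl
      rw [h2]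
      linarith [hf i]
  refine ⟨fun hweak => ?_, hmain⟩
  obtain ⟨m, f, hm, -, hf⟩ := hmain (1 / 2) (by norm_num)
  have h1 := (hweak f).comp hm.tendsto_atTop
  have h2 := ge_of_tendsto' h1 fun i => (hf i).le
  norm_num at h2
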